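/- arXiv:2012.09548 — 2 statements merged into one kernel-verified Lean document; each statement's English description precedes it below -/
import Mathlib

section
/- For all real numbers a, b, c, d, the number (1/(2π))·(Ψ(b−a) + Ψ(c−b) + Ψ(d−c) + Ψ(a−d)) is an integer belonging to {−1, 0, 1}. In particular, the discrete vorticity d_u(εi) of any spin field u : εℤ² → 𝕊¹ only takes the values −1, 0, 1. -/
/-- The function `Ψ : ℝ → [−π, π]`: `Ψ(t)` is the unique element of `(−π, π)` with
`t − Ψ(t) ∈ 2πℤ` when `t ∉ π + 2πℤ`, `Ψ(t) = π` when `t ∈ π + 2πℤ` and `t > 0`,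
and `Ψ(t) = −π` when `t ∈ π + 2πℤ` and `t < 0`. -/
noncomputable def Psi (t : ℝ) : ℝ :=
  if 0 ≤ t then t - 2 * Real.pi * ⌈(t - Real.pi) / (2 * Real.pi)⌉
  else t - 2 * Real.pi * ⌊(t + Real.pi) / (2 * Real.pi)⌋

theorem Psi_spec (t : ℝ) : ∃ n : ℤ, Psi t = t - 2 * Real.pi * n ∧ -Real.pi ≤ Psi t ∧
    Psi t ≤ Real.pi ∧ (Psi t = Real.pi → 0 < t) ∧ (Psi t = -Real.pi → t < 0) := by
  have hp := Real.pi_pos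
  have h2 : 0 < 2 * Real.pi := by positivity
  unfold Psi
  split_ifs with h
  · have h3 := Int.le_ceil ((t - Real.pi) / (2 * Real.pi))
    have h4 := Int.ceil_lt_add_one ((t - Real.pi) / (2 * Real.pi))
    generalize ⌈(t - Real.pi) / (2 * Real.pi)⌉ = n at *
    rw [div_le_iff₀ h2] at h3
    rw [← sub_lt_iff_lt_add, lt_div_iff₀ h2] at h4
    refine ⟨n, rfl, by linarith, by linarith, fun h5 => ?_, fun h5 => by linarith⟩
    rcases h.lt_or_eq with h6 | h6
    · exact h6
    · exfalso
      subst h6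
      have h7 : Real.pi * ((2 * n + 1 : ℤ) : ℝ) = 0 := by push_cast; linarith
      rcases mul_eq_zero.1 h7 with h8 | h8
      · exact hp.ne' h8
      · have : 2 * n + 1 = 0 := by exact_mod_cast h8
        omega
  · have h3 := Int.floor_le ((t + Real.pi) / (2 * Real.pi))
    have h4 := Int.lt_floor_add_one ((t + Real.pi) / (2 * Real.pi))
    generalize ⌊(t + Real.pi) / (2 * Real.pi)⌋ = n at *
    rw [le_div_iff₀ h2] at h3
    rw [div_lt_iff₀ h2] at h4
    exact ⟨n, rfl, by linarith, by linarith, fun h5 => by linarith, fun h5 => not_le.1 h⟩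

/-- For all real `a, b, c, d`, the number
`(1/(2π))·(Ψ(b−a) + Ψ(c−b) + Ψ(d−c) + Ψ(a−d))` is an integer belonging to `{−1, 0, 1}`;
hence the discrete vorticity of a spin field only takes the values `−1, 0, 1`. -/
theorem discrete_vorticity_mem (a b c d : ℝ) :
    (1 / (2 * Real.pi)) * (Psi (b - a) + Psi (c - b) + Psi (d - c) + Psi (a - d)) ∈
      ({-1, 0, 1} : Set ℝ) := by
  have hp := Real.pi_pos
  obtain ⟨n₁, e₁, l₁, u₁, p₁, m₁⟩ := Psi_spec (b - a)
  obtain ⟨n₂, e₂, l₂, u₂, p₂, m₂⟩ := Psi_spec (c - b)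
  obtain ⟨n₃, e₃, l₃, u₃, p₃, m₃⟩ := Psi_spec (d - c)
  obtain ⟨n₄, e₄, l₄, u₄, p₄, m₄⟩ := Psi_spec (a - d)
  obtain ⟨N, hN⟩ : ∃ N : ℤ, N = -(n₁ + n₂ + n₃ + n₄) := ⟨_, rfl⟩
  have hs : Psi (b - a) + Psi (c - b) + Psi (d - c) + Psi (a - d) = 2 * Real.pi * N := by
    rw [e₁, e₂, e₃, e₄, hN]; push_cast; ring
  have hlt : (N : ℝ) < 2 := by
    by_contra! h
    have h1 : 2 * Real.pi * 2 ≤ 2 * Real.pi * N := by gcongr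
    have := p₁ (by linarith)
    have := p₂ (by linarith)
    have := p₃ (by linarith)
    have := p₄ (by linarith)
    linarith
  have hgt : (-2 : ℝ) < N := by
    by_contra! h
    have h1 : 2 * Real.pi * N ≤ 2 * Real.pi * (-2) := by gcongr
    have := m₁ (by linarith)
    have := m₂ (by linarith)
    have := m₃ (by linarith)
    have := m₄ (by linarith)
    linarith
  have hlt' : N < 2 := by exact_mod_cast hlt
  have hgt' : -2 < N := by exact_mod_cast hgt
  have hv : (1 / (2 * Real.pi)) * (2 * Real.pi * N) = (N : ℝ) := by field_simp
  rw [hs, hv]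
  clear hN hs hlt hgt hv
  interval_cases N <;> simp
end

section
/- For every σ ∈ (0,1) there exists θ₀ > 0 such that for every θ ∈ (0, θ₀) and all u, v ∈ 𝕊¹ whose geodesic distance d_{𝕊¹}(u,v) is a nonnegative integer multiple of θ, one has ‖u − v‖² ≥ (1 − σ)·θ·d_{𝕊¹}(u,v). -/
open scoped RealInnerProductSpace

noncomputable abbrev E2 := EuclideanSpace ℝ (Fin 2)

/-- Geodesic distance on the unit circle `𝕊¹ ⊂ ℝ²`. -/
noncomputable def dS1 (u v : E2) : ℝ := Real.arccos ⟪u, v⟫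

theorem clock_energy_geodesic_lower_bound (σ : ℝ) (hσ : σ ∈ Set.Ioo (0 : ℝ) 1) :
    ∃ θ₀ : ℝ, 0 < θ₀ ∧ ∀ θ : ℝ, θ ∈ Set.Ioo 0 θ₀ →
      ∀ u v : E2, ‖u‖ = 1 → ‖v‖ = 1 → (∃ k : ℕ, dS1 u v = (k : ℝ) * θ) →
        (1 - σ) * θ * dS1 u v ≤ ‖u - v‖ ^ 2 := by
  obtain ⟨h0, h1⟩ := hσ
  refine ⟨σ / 2, by linarith, ?_⟩
  rintro θ ⟨ht0, ht1⟩ u v hu hv ⟨k, hk⟩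
  have habs : |⟪u, v⟫| ≤ 1 := by
    have := abs_real_inner_le_norm u v
    rwa [hu, hv, one_mul] at this
  have hcos : Real.cos (dS1 u v) = ⟪u, v⟫ :=
    Real.cos_arccos (abs_le.1 habs).1 (abs_le.1 habs).2
  have hn : ‖u - v‖ ^ 2 = 2 - 2 * Real.cos (dS1 u v) := by
    rw [norm_sub_sq_real, hu, hv, hcos]; ring
  have hd0 : 0 ≤ dS1 u v := Real.arccos_nonneg _
  have hdpi : dS1 u v ≤ Real.pi := Real.arccos_le_pi _
  rw [hn]
  generalize dS1 u v = d at *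
  rcases Nat.eq_zero_or_pos k with rfl | hkpos
  · have : d = 0 := by simpa using hk
    subst this
    simp
  have hk1 : (1 : ℝ) ≤ k := by exact_mod_cast hkpos
  have htd : θ ≤ d := by rw [hk]; nlinarith
  rcases Nat.lt_or_ge k 3 with h3 | h3
  · have hk2 : (k : ℝ) ≤ 2 := by exact_mod_cast Nat.le_of_lt_succ h3
    have hds : d ≤ σ := by rw [hk]; nlinarith
    have hb := (abs_le.1 (Real.cos_bound (x := d) (by rw [abs_of_nonneg hd0]; linarith))).2
    rw [abs_of_nonneg hd0] at hb
    have hd2 : d ^ 2 ≤ σ := by nlinarith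
    have h4 : d ^ 4 ≤ σ * d ^ 2 := by nlinarith [sq_nonneg d]
    have h5 : (1 - σ) * θ * d ≤ (1 - σ) * d * d := by
      gcongr
    have h6 : 0 ≤ d ^ 4 := by positivity
    nlinarith
  · have hk3 : (3 : ℝ) ≤ k := by exact_mod_cast h3
    have h3t : 3 * θ ≤ d := by rw [hk]; nlinarith
    have hb := Real.cos_le_one_sub_mul_cos_sq (x := d) (by rwa [abs_of_nonneg hd0])
    have hp : (1 : ℝ) / 3 ≤ 4 / Real.pi ^ 2 := by
      rw [div_le_div_iff₀ (by norm_num) (by positivity)]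
      nlinarith [Real.pi_lt_d2, Real.pi_pos]
    have h7 : 1 / 3 * d ^ 2 ≤ 4 / Real.pi ^ 2 * d ^ 2 := by gcongr
    have h8 : (4 / Real.pi ^ 2) * d ^ 2 = 2 * (2 / Real.pi ^ 2 * d ^ 2) := by ring
    have h9 : 3 * θ * d ≤ d * d := by gcongr
    have h10 : 0 ≤ σ * θ * d := by positivity
    nlinarith
end
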